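/- The best constant of the fractional Hardy inequality C_{N,α} = 2^α Γ²((N+α)/4) / Γ²((N-α)/4) satisfies C_{N,α} ∼ (N/2)^α as N → ∞, for each fixed 0 < α < 2; consequently j_{(N-2)/2,1}^α ∼ C_{N,α} as N → ∞. -/

import Mathlib

open Real Filter

noncomputable def besselJ (μ z : ℝ) : ℝ :=
  ∑' k : ℕ, ((-1 : ℝ) ^ k / ((k.factorial : ℝ) * Real.Gamma ((k : ℝ) + μ + 1))) *
    (z / 2) ^ (2 * (k : ℝ) + μ)

def IsFirstPosZero (f : ℝ → ℝ) (j : ℝ) : Prop :=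
  0 < j ∧ f j = 0 ∧ ∀ z, 0 < z → z < j → f z ≠ 0

/-- Best constant of the fractional Hardy inequality. -/
noncomputable def fracHardyConst (N : ℕ) (α : ℝ) : ℝ :=
  2 ^ α * Real.Gamma (((N : ℝ) + α) / 4) ^ 2 / Real.Gamma (((N : ℝ) - α) / 4) ^ 2

open Set

/-- coefficients of the reduced Bessel series -/
noncomputable def bcoef (μ : ℝ) (k : ℕ) : ℝ :=
  (-1 : ℝ) ^ k / ((k.factorial : ℝ) * Real.Gamma ((k : ℝ) + μ + 1))

noncomputable def bF (μ t : ℝ) : ℝ := ∑' k : ℕ, bcoef μ k * t ^ k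

lemma one_le_Gamma_aux {x : ℝ} (hx : 2 ≤ x) : 1 ≤ Real.Gamma x := by
  have h := Real.Gamma_strictMonoOn_Ici.monotoneOn (Set.mem_Ici.2 (le_refl (2:ℝ))) hx hx
  rwa [Real.Gamma_two] at h

lemma bcoef_bound {μ : ℝ} (hμ : 1 ≤ μ) (k : ℕ) : |bcoef μ k| ≤ 1 / (k.factorial : ℝ) := by
  have h1 : 1 ≤ Real.Gamma ((k : ℝ) + μ + 1) := one_le_Gamma_aux (by
    have : (0:ℝ) ≤ k := Nat.cast_nonneg k
    linarith)
  have h2 : (0:ℝ) < k.factorial := by exact_mod_cast k.factorial_pos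
  unfold bcoef
  rw [abs_div, abs_pow, abs_neg, abs_one, one_pow, abs_of_pos (by positivity)]
  apply one_div_le_one_div_of_le h2
  nlinarith

lemma bterm_bound {μ : ℝ} (hμ : 1 ≤ μ) {t R : ℝ} (ht : |t| ≤ R) (k : ℕ) :
    ‖bcoef μ k * t ^ k‖ ≤ R ^ k / (k.factorial : ℝ) := by
  rw [Real.norm_eq_abs, abs_mul, abs_pow]
  have h := bcoef_bound hμ k
  have h3 : |t| ^ k ≤ R ^ k := pow_le_pow_left₀ (abs_nonneg _) ht k
  calc |bcoef μ k| * |t| ^ k ≤ 1 / (k.factorial : ℝ) * R ^ k := by gcongr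
    _ = _ := by ring

lemma bsummable {μ : ℝ} (hμ : 1 ≤ μ) (t : ℝ) : Summable fun k : ℕ => bcoef μ k * t ^ k :=
  Summable.of_norm_bounded (Real.summable_pow_div_factorial |t|) (bterm_bound hμ le_rfl)

lemma bcoef_succ (μ : ℝ) (k : ℕ) : bcoef μ (k + 1) * ((k : ℝ) + 1) = - bcoef (μ + 1) k := by
  unfold bcoef
  have : ((k + 1 : ℕ) : ℝ) + μ + 1 = (k : ℝ) + (μ + 1) + 1 := by push_cast; ring
  rw [this, Nat.factorial_succ]
  push_cast
  have h2 : (k.factorial : ℝ) ≠ 0 := by exact_mod_cast k.factorial_ne_zero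
  have h3 : (k : ℝ) + 1 ≠ 0 := by positivity
  rcases eq_or_ne (Real.Gamma ((k : ℝ) + (μ + 1) + 1)) 0 with h | h
  · simp [h]
  · field_simp
    ring

lemma bF_hasDerivAt {μ : ℝ} (hμ : 1 ≤ μ) (t : ℝ) : HasDerivAt (bF μ) (- bF (μ + 1) t) t := by
  have e : bF μ = fun t => bcoef μ 0 + ∑' k : ℕ, bcoef μ (k + 1) * t ^ (k + 1) := by
    funext s
    unfold bF
    rw [(bsummable hμ s).tsum_eq_zero_add]
    simp
  rw [e]
  have e2 : - bF (μ + 1) t = ∑' k : ℕ, - (bcoef (μ + 1) k * t ^ k) := by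
    rw [tsum_neg]; rfl
  rw [e2]
  apply HasDerivAt.const_add
  refine hasDerivAt_tsum_of_isPreconnected (g := fun k s => bcoef μ (k + 1) * s ^ (k + 1))
    (g' := fun k s => - (bcoef (μ + 1) k * s ^ k)) (t := Metric.ball 0 (|t| + 1)) (y₀ := t)
    (Real.summable_pow_div_factorial (|t| + 1)) Metric.isOpen_ball
    (convex_ball _ _).isPreconnected ?_ ?_ ?_ ?_ ?_
  · intro k y _
    have h := (hasDerivAt_pow (k + 1) y).const_mul (bcoef μ (k + 1))
    refine h.congr_deriv ?_
    rw [← neg_mul, ← bcoef_succ]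
    push_cast
    ring
  · intro k y hy
    rw [norm_neg]
    refine bterm_bound (by linarith) ?_ k
    rw [mem_ball_zero_iff, Real.norm_eq_abs] at hy
    exact hy.le
  · simp
  · exact (summable_nat_add_iff 1).2 (bsummable hμ t)
  · simp

lemma bF_rec {μ : ℝ} (hμ : 1 ≤ μ) (t : ℝ) :
    t * bF (μ + 2) t = (μ + 1) * bF (μ + 1) t - bF μ t := by
  have s1 := bsummable (μ := μ + 1) (by linarith) t
  have s0 := bsummable hμ t
  unfold bF
  rw [← tsum_mul_left, ← tsum_mul_left, ← (s1.mul_left (μ + 1)).tsum_sub s0,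
    ((s1.mul_left (μ + 1)).sub s0).tsum_eq_zero_add]
  have key : ∀ k : ℕ, (μ + 1) * bcoef (μ + 1) k - bcoef μ k = - (k : ℝ) * bcoef (μ + 1) k := by
    intro k
    have hk : (0:ℝ) ≤ k := Nat.cast_nonneg k
    have hne : (k : ℝ) + μ + 1 ≠ 0 := by positivity
    have hG : Real.Gamma ((k : ℝ) + (μ + 1) + 1) = ((k : ℝ) + μ + 1) * Real.Gamma ((k : ℝ) + μ + 1) := by
      rw [← Real.Gamma_add_one hne]; congr 1; ring
    have hp : Real.Gamma ((k : ℝ) + μ + 1) ≠ 0 := (Real.Gamma_pos_of_pos (by positivity)).ne'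
    have h2 : (k.factorial : ℝ) ≠ 0 := by exact_mod_cast k.factorial_ne_zero
    unfold bcoef
    rw [hG]
    field_simp
    ring
  have h0 := key 0
  simp only [Nat.cast_zero, neg_zero, zero_mul] at h0
  simp only [pow_zero, mul_one, h0, zero_add]
  congr 1
  funext k
  have hk := key (k + 1)
  have hs := bcoef_succ (μ + 1) k
  rw [show μ + 1 + 1 = μ + 2 by ring] at hs
  push_cast at hk
  linear_combination (-t ^ (k + 1)) * hk + t ^ (k + 1) * hs

lemma besselJ_eq (μ : ℝ) {z : ℝ} (hz : 0 < z) :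
    besselJ μ z = (z / 2) ^ μ * bF μ (z ^ 2 / 4) := by
  unfold besselJ bF
  rw [← tsum_mul_left]
  congr 1
  funext k
  have : (z / 2) ^ (2 * (k : ℝ) + μ) = (z ^ 2 / 4) ^ k * (z / 2) ^ μ := by
    rw [Real.rpow_add (by positivity)]
    congr 1
    rw [show (2 * (k : ℝ)) = ((2 * k : ℕ) : ℝ) by push_cast; ring, Real.rpow_natCast, pow_mul]
    congr 1
    ring
  rw [this]
  unfold bcoef
  ring

/-- `√z J_μ(z)` up to a constant. -/
noncomputable def bu (μ z : ℝ) : ℝ := z ^ (μ + 1 / 2) * bF μ (z ^ 2 / 4)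

noncomputable def bu' (μ z : ℝ) : ℝ :=
  (μ + 1 / 2) * z ^ (μ - 1 / 2) * bF μ (z ^ 2 / 4)
    - z ^ (μ + 3 / 2) / 2 * bF (μ + 1) (z ^ 2 / 4)

lemma bg_hasDerivAt {μ : ℝ} (hμ : 1 ≤ μ) (z : ℝ) :
    HasDerivAt (fun z => bF μ (z ^ 2 / 4)) (- bF (μ + 1) (z ^ 2 / 4) * (z / 2)) z := by
  have h1 : HasDerivAt (fun z : ℝ => z ^ 2 / 4) (z / 2) z := by
    have := (hasDerivAt_pow 2 z).div_const 4
    refine this.congr_deriv ?_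
    norm_num
    ring
  exact (bF_hasDerivAt hμ (z ^ 2 / 4)).comp z h1

lemma bg_cont {μ : ℝ} (hμ : 1 ≤ μ) : Continuous (fun z => bF μ (z ^ 2 / 4)) :=
  continuous_iff_continuousAt.2 fun z => (bg_hasDerivAt hμ z).continuousAt

lemma bu_hasDerivAt {μ : ℝ} (hμ : 1 ≤ μ) {z : ℝ} (hz : 0 < z) :
    HasDerivAt (bu μ) (bu' μ z) z := by
  have h1 := Real.hasDerivAt_rpow_const (x := z) (p := μ + 1 / 2) (Or.inl hz.ne')
  have h := h1.mul (bg_hasDerivAt hμ z)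
  refine h.congr_deriv ?_
  unfold bu'
  rw [show μ + 1 / 2 - 1 = μ - 1 / 2 by ring, show μ + 3 / 2 = (μ + 1 / 2) + 1 by ring,
    Real.rpow_add_one hz.ne']
  ring

lemma bu'_hasDerivAt {μ : ℝ} (hμ : 1 ≤ μ) {z : ℝ} (hz : 0 < z) :
    HasDerivAt (bu' μ) (((μ ^ 2 - 1 / 4) / z ^ 2 - 1) * bu μ z) z := by
  have h1 := (Real.hasDerivAt_rpow_const (x := z) (p := μ - 1 / 2) (Or.inl hz.ne')).const_mul
    (μ + 1 / 2)
  have h2 := (Real.hasDerivAt_rpow_const (x := z) (p := μ + 3 / 2) (Or.inl hz.ne')).div_const 2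
  have h := (h1.mul (bg_hasDerivAt hμ z)).sub
    (h2.mul (bg_hasDerivAt (μ := μ + 1) (by linarith) z))
  refine h.congr_deriv ?_
  have hr := bF_rec hμ (z ^ 2 / 4)
  unfold bu
  rw [show μ + 1 + 1 = μ + 2 by ring]
  generalize bF (μ + 2) (z ^ 2 / 4) = F2 at *
  generalize bF (μ + 1) (z ^ 2 / 4) = F1 at *
  generalize bF μ (z ^ 2 / 4) = F0 at *
  have e1 : z ^ (μ - 1 / 2) = z ^ (μ - 1 / 2 - 1) * z := by
    rw [← Real.rpow_add_one hz.ne']; congr 1; ring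
  have e2 : z ^ (μ + 1 / 2) = z ^ (μ - 1 / 2 - 1) * z * z := by
    rw [← e1, ← Real.rpow_add_one hz.ne']; congr 1; ring
  have e3 : z ^ (μ + 3 / 2) = z ^ (μ - 1 / 2 - 1) * z * z * z := by
    rw [← e2, ← Real.rpow_add_one hz.ne']; congr 1; ring
  have e4 : μ + 3 / 2 - 1 = μ + 1 / 2 := by ring
  rw [e4, e3, e2, e1]
  generalize z ^ (μ - 1 / 2 - 1) = w at *
  field_simp
  have hF : z ^ 2 * F2 = 4 * ((μ + 1) * F1 - F0) := by linarith
  ring_nf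
  ring_nf at hF
  linear_combination (4 * w * z ^ 2) * hF

lemma bu_contOn {μ : ℝ} (hμ : 1 ≤ μ) : Continuous (bu μ) := by
  refine Continuous.mul ?_ (bg_cont hμ)
  exact Real.continuous_rpow_const (by linarith)

lemma bF_zero_pos {μ : ℝ} (hμ : 1 ≤ μ) : 0 < bF μ 0 := by
  unfold bF
  rw [(bsummable hμ 0).tsum_eq_zero_add]
  simp [bcoef]
  exact Real.Gamma_pos_of_pos (by linarith)

lemma bu_zero_iff {μ z : ℝ} (hz : 0 < z) : besselJ μ z = 0 ↔ bF μ (z ^ 2 / 4) = 0 := by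
  rw [besselJ_eq μ hz]
  have : (z / 2) ^ μ ≠ 0 := (Real.rpow_pos_of_pos (by positivity) _).ne'
  simp [this]

lemma bu_pos {μ j : ℝ} (hμ : 1 ≤ μ) (hj : IsFirstPosZero (besselJ μ) j) {z : ℝ} (hz : 0 < z)
    (hzj : z < j) : 0 < bu μ z := by
  unfold bu
  refine mul_pos (Real.rpow_pos_of_pos hz _) ?_
  by_contra hneg
  push Not at hneg
  have h0 : (0:ℝ) < bF μ (0 ^ 2 / 4) := by simpa using bF_zero_pos hμ
  obtain ⟨w, hw, hw0⟩ := intermediate_value_Icc' hz.le (bg_cont hμ).continuousOn ⟨hneg, h0.le⟩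
  simp only at hw0
  have hwpos : 0 < w := by
    rcases hw.1.eq_or_lt with h | h
    · rw [← h] at hw0; linarith
    · exact h
  exact hj.2.2 w hwpos (lt_of_le_of_lt hw.2 hzj) ((bu_zero_iff hwpos).2 hw0)

lemma bu_at {μ j : ℝ} (hj : IsFirstPosZero (besselJ μ) j) : bu μ j = 0 := by
  unfold bu
  rw [(bu_zero_iff hj.1).1 hj.2.1, mul_zero]

lemma j_lower {μ j : ℝ} (hμ : 1 ≤ μ) (hj : IsFirstPosZero (besselJ μ) j) : μ - 1 / 2 ≤ j := by
  by_contra hlt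
  push Not at hlt
  have hj0 := hj.1
  have hc : ConvexOn ℝ (Icc 0 j) (bu μ) := by
    refine convexOn_of_hasDerivWithinAt2_nonneg (f' := bu' μ)
      (f'' := fun z => ((μ ^ 2 - 1 / 4) / z ^ 2 - 1) * bu μ z) (convex_Icc _ _)
      (bu_contOn hμ).continuousOn ?_ ?_ ?_
    · intro x hx
      rw [interior_Icc] at hx
      exact (bu_hasDerivAt hμ hx.1).hasDerivWithinAt
    · intro x hx
      rw [interior_Icc] at hx
      exact (bu'_hasDerivAt hμ hx.1).hasDerivWithinAt
    · intro x hx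
      rw [interior_Icc] at hx
      refine mul_nonneg ?_ (bu_pos hμ hj hx.1 hx.2).le
      have := hx.1
      have := hx.2
      rw [sub_nonneg, le_div_iff₀ (by positivity)]
      nlinarith
  have h := hc.2 (left_mem_Icc.2 hj0.le) (right_mem_Icc.2 hj0.le)
    (show (0:ℝ) ≤ 1 / 2 by norm_num) (show (0:ℝ) ≤ 1 / 2 by norm_num) (by norm_num)
  have hp := bu_pos hμ hj (z := j / 2) (by linarith) (by linarith)
  have h0 : bu μ 0 = 0 := by
    unfold bu
    rw [Real.zero_rpow (by linarith), zero_mul]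
  rw [bu_at hj, h0] at h
  simp only [smul_eq_mul, mul_zero, zero_add, add_zero] at h
  rw [show 1 / 2 * j = j / 2 by ring] at h
  linarith

lemma j_upper {μ j c a : ℝ} (hμ : 1 ≤ μ) (hj : IsFirstPosZero (besselJ μ) j) (hc : 0 < c)
    (ha : 0 < a) (hac : μ ^ 2 / a ^ 2 ≤ 1 - c ^ 2) : j ≤ a + π / c := by
  by_contra hlt
  push Not at hlt
  have hpc : 0 < π / c := div_pos Real.pi_pos hc
  set b := a + π / c with hb
  have hsin : ∀ z, HasDerivAt (fun z => Real.sin (c * (z - a))) (Real.cos (c * (z - a)) * c) z := by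
    intro z
    have h1 : HasDerivAt (fun z => c * (z - a)) c z := by
      simpa using ((hasDerivAt_id z).sub_const a).const_mul c
    exact (Real.hasDerivAt_sin _).comp z h1
  have hcos : ∀ z, HasDerivAt (fun z => Real.cos (c * (z - a)) * c)
      (-Real.sin (c * (z - a)) * c * c) z := by
    intro z
    have h1 : HasDerivAt (fun z => c * (z - a)) c z := by
      simpa using ((hasDerivAt_id z).sub_const a).const_mul c
    exact ((Real.hasDerivAt_cos _).comp z h1).mul_const c
  have hW : ∀ z, 0 < z → HasDerivAt
      (fun z => bu' μ z * Real.sin (c * (z - a)) - bu μ z * (Real.cos (c * (z - a)) * c))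
      (((μ ^ 2 - 1 / 4) / z ^ 2 - 1 + c ^ 2) * (bu μ z * Real.sin (c * (z - a)))) z := by
    intro z hz
    refine (((bu'_hasDerivAt hμ hz).mul (hsin z)).sub
      ((bu_hasDerivAt hμ hz).mul (hcos z))).congr_deriv ?_
    ring
  have hanti : AntitoneOn
      (fun z => bu' μ z * Real.sin (c * (z - a)) - bu μ z * (Real.cos (c * (z - a)) * c))
      (Icc a b) := by
    refine antitoneOn_of_hasDerivWithinAt_nonpos (convex_Icc _ _)
      (fun z hz => (hW z (lt_of_lt_of_le ha hz.1)).continuousAt.continuousWithinAt)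
      (fun z hz => (hW z ?_).hasDerivWithinAt) ?_
    · rw [interior_Icc] at hz
      exact ha.trans hz.1
    · intro z hz
      rw [interior_Icc] at hz
      have hz0 := ha.trans hz.1
      apply mul_nonpos_of_nonpos_of_nonneg
      · have h1 : (μ ^ 2 - 1 / 4) / z ^ 2 ≤ μ ^ 2 / a ^ 2 := by
          have := hz.1.le
          gcongr
          linarith
        linarith
      · refine mul_nonneg (bu_pos hμ hj hz0 (hz.2.trans hlt)).le ?_
        apply Real.sin_nonneg_of_nonneg_of_le_pi
        · exact mul_nonneg hc.le (by linarith [hz.1])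
        · have : z - a ≤ π / c := by linarith [hz.2]
          rwa [le_div_iff₀ hc, mul_comm] at this
  have h := hanti (left_mem_Icc.2 (by linarith)) (right_mem_Icc.2 (by linarith)) (by linarith)
  have hcb : c * (b - a) = π := by rw [hb]; field_simp; ring
  simp only [hcb, sub_self, mul_zero, Real.sin_zero, Real.cos_zero, Real.sin_pi, Real.cos_pi] at h
  have p1 := bu_pos hμ hj ha (by linarith)
  have p2 := bu_pos hμ hj (z := b) (by linarith) hlt
  nlinarith [mul_pos p1 hc, mul_pos p2 hc]

lemma j_tendsto (j : ℕ → ℝ)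
    (hj : ∀ N : ℕ, 1 ≤ N → IsFirstPosZero (besselJ (((N : ℝ) - 2) / 2)) (j N)) :
    Tendsto (fun N : ℕ => j N / ((N : ℝ) / 2)) atTop (nhds 1) := by
  have hN : Tendsto (fun N : ℕ => (N : ℝ)) atTop atTop := tendsto_natCast_atTop_atTop
  rw [Metric.tendsto_atTop]
  intro ε hε
  set δ := ε / 2 with hδ
  have hδ0 : 0 < δ := by positivity
  set c := Real.sqrt (1 - 1 / (1 + δ) ^ 2) with hc
  have hlt : 1 / (1 + δ) ^ 2 < 1 := by
    rw [div_lt_one (by positivity)]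
    nlinarith
  have hc0 : 0 < c := Real.sqrt_pos.2 (by linarith)
  have hc2 : c ^ 2 = 1 - 1 / (1 + δ) ^ 2 := Real.sq_sqrt (by linarith)
  have hpc : 0 < π / c := div_pos Real.pi_pos hc0
  obtain ⟨M, hM⟩ := exists_nat_gt (max 4 (max (3 / ε) (2 * (π / c) / δ)))
  refine ⟨M, fun N hMN => ?_⟩
  have hMN' : (M : ℝ) ≤ N := by exact_mod_cast hMN
  have h4 : (4:ℝ) < N := lt_of_lt_of_le (lt_of_le_of_lt (le_max_left _ _) hM) hMN'
  have h5 : 3 / ε < N := lt_of_lt_of_le (lt_of_le_of_lt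
    ((le_max_left _ _).trans (le_max_right _ _)) hM) hMN'
  have h6 : 2 * (π / c) / δ < N := lt_of_lt_of_le (lt_of_le_of_lt
    ((le_max_right _ _).trans (le_max_right _ _)) hM) hMN'
  rw [div_lt_iff₀ hε] at h5
  rw [div_lt_iff₀ hδ0] at h6
  have hN1 : 1 ≤ N := by
    have : (1:ℝ) ≤ N := by linarith
    exact_mod_cast this
  have hμ : 1 ≤ ((N : ℝ) - 2) / 2 := by linarith
  have l := j_lower hμ (hj N hN1)
  have u := j_upper (a := (1 + δ) * (((N : ℝ) - 2) / 2)) hμ (hj N hN1) hc0 (by positivity) (by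
    rw [hc2]
    have : ((N : ℝ) - 2) / 2 ≠ 0 := by linarith
    rw [mul_pow]
    apply le_of_eq
    generalize ((N : ℝ) - 2) / 2 = μ at *
    field_simp
    ring)
  have hNp : (0:ℝ) < (N : ℝ) / 2 := by linarith
  rw [Real.dist_eq, abs_lt]
  constructor
  · rw [lt_sub_iff_add_lt, lt_div_iff₀ hNp]
    nlinarith
  · rw [sub_lt_iff_lt_add, div_lt_iff₀ hNp]
    nlinarith

lemma ratio_upper {x a : ℝ} (hx : 0 < x) (ha : 0 < a) (ha1 : a < 1) :
    Real.Gamma (x + a) / Real.Gamma x ≤ x ^ a := by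
  have hG := Real.Gamma_pos_of_pos hx
  have h := Real.Gamma_mul_add_mul_le_rpow_Gamma_mul_rpow_Gamma hx (show 0 < x + 1 by linarith)
    (show 0 < 1 - a by linarith) ha (by ring)
  rw [show (1 - a) * x + a * (x + 1) = x + a by ring, Real.Gamma_add_one hx.ne',
    Real.mul_rpow hx.le hG.le] at h
  rw [div_le_iff₀ hG]
  have e : Real.Gamma x ^ (1 - a) * Real.Gamma x ^ a = Real.Gamma x := by
    rw [← Real.rpow_add hG]; simp
  calc _ ≤ _ := h
    _ = x ^ a * (Real.Gamma x ^ (1 - a) * Real.Gamma x ^ a) := by ring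
    _ = _ := by rw [e]

lemma ratio_lower {x a : ℝ} (hx : 0 < x) (ha : 0 < a) (ha1 : a < 1) :
    x * (x + a) ^ (a - 1) ≤ Real.Gamma (x + a) / Real.Gamma x := by
  have hxa : 0 < x + a := by linarith
  have h := ratio_upper hxa (show 0 < 1 - a by linarith) (by linarith)
  rw [show x + a + (1 - a) = x + 1 by ring, Real.Gamma_add_one hx.ne'] at h
  have hG := Real.Gamma_pos_of_pos hx
  have hG2 := Real.Gamma_pos_of_pos hxa
  rw [div_le_iff₀ hG2] at h
  rw [le_div_iff₀ hG, show a - 1 = -(1 - a) by ring, Real.rpow_neg hxa.le]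
  have hp : 0 < (x + a) ^ (1 - a) := Real.rpow_pos_of_pos hxa _
  rw [← div_eq_mul_inv, div_mul_eq_mul_div, div_le_iff₀ hp]
  linarith

lemma ratio_tendsto (α : ℝ) (hα : 0 < α) (hα2 : α < 2) :
    Tendsto (fun N : ℕ => Real.Gamma (((N : ℝ) + α) / 4) / Real.Gamma (((N : ℝ) - α) / 4)
      / ((N : ℝ) / 4) ^ (α / 2)) atTop (nhds 1) := by
  have hN : Tendsto (fun N : ℕ => (N : ℝ)) atTop atTop := tendsto_natCast_atTop_atTop
  have hlin : ∀ b : ℝ, Tendsto (fun N : ℕ => (((N : ℝ) + b) / 4) / ((N : ℝ) / 4)) atTop (nhds 1) := by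
    intro b
    have h1 : Tendsto (fun N : ℕ => 1 + b / (N : ℝ)) atTop (nhds (1 + 0)) :=
      (tendsto_const_nhds).add (hN.const_div_atTop b)
    rw [add_zero] at h1
    refine h1.congr' ?_
    filter_upwards [eventually_gt_atTop 0] with N hNpos
    have : (0:ℝ) < N := by exact_mod_cast hNpos
    field_simp
  have hm := hlin (-α)
  have hp := hlin α
  have u := hm.rpow_const (p := α / 2) (Or.inl one_ne_zero)
  have l := hm.mul (hp.rpow_const (p := α / 2 - 1) (Or.inl one_ne_zero))
  rw [Real.one_rpow] at u l
  rw [one_mul] at l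
  refine tendsto_of_tendsto_of_tendsto_of_le_of_le' l u ?_ ?_
  · filter_upwards [hN.eventually_gt_atTop 2] with N hN2
    have hx : 0 < ((N : ℝ) - α) / 4 := by linarith
    have hy : 0 < (N : ℝ) / 4 := by linarith
    have h := ratio_lower hx (show 0 < α / 2 by linarith) (by linarith)
    rw [show ((N : ℝ) - α) / 4 + α / 2 = ((N : ℝ) + α) / 4 by ring] at h
    rw [le_div_iff₀ (Real.rpow_pos_of_pos hy _)]
    refine le_trans (le_of_eq ?_) h
    rw [Real.div_rpow (by linarith) hy.le, Real.rpow_sub_one hy.ne', ← sub_eq_add_neg]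
    have := (Real.rpow_pos_of_pos hy (α / 2)).ne'
    generalize ((N : ℝ) / 4) ^ (α / 2) = w at *
    generalize (((N : ℝ) + α) / 4) ^ (α / 2 - 1) = v at *
    field_simp
  · filter_upwards [hN.eventually_gt_atTop 2] with N hN2
    have hx : 0 < ((N : ℝ) - α) / 4 := by linarith
    have hy : 0 < (N : ℝ) / 4 := by linarith
    have h := ratio_upper hx (show 0 < α / 2 by linarith) (by linarith)
    rw [show ((N : ℝ) - α) / 4 + α / 2 = ((N : ℝ) + α) / 4 by ring] at h
    rw [← sub_eq_add_neg, Real.div_rpow hx.le hy.le]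
    gcongr

lemma const_tendsto (α : ℝ) (hα : 0 < α) (hα2 : α < 2) :
    Tendsto (fun N : ℕ => fracHardyConst N α / ((N : ℝ) / 2) ^ α) atTop (nhds 1) := by
  have h := (ratio_tendsto α hα hα2).pow 2
  rw [one_pow] at h
  refine h.congr ?_
  intro N
  have hy : (0:ℝ) ≤ (N : ℝ) / 4 := by positivity
  have e1 : (((N : ℝ) / 4) ^ (α / 2)) ^ 2 = ((N : ℝ) / 4) ^ α := by
    rw [← Real.rpow_natCast, ← Real.rpow_mul hy]
    congr 1
    push_cast
    ring
  have e2 : ((N : ℝ) / 2) ^ α = 2 ^ α * ((N : ℝ) / 4) ^ α := by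
    rw [← Real.mul_rpow (by norm_num) hy]
    congr 1
    ring
  have h2 : (2:ℝ) ^ α ≠ 0 := (Real.rpow_pos_of_pos (by norm_num) _).ne'
  unfold fracHardyConst
  rw [e2, div_pow, div_pow, e1, mul_div_assoc, mul_div_mul_left _ _ h2]

/-- `C_{N,α} ∼ (N/2)^α` and `j_{(N-2)/2,1}^α ∼ C_{N,α}` as `N → ∞`
(where `a_N ∼ b_N` means `b_N / a_N → 1`). -/
theorem fracHardyConst_asymp (α : ℝ) (hα : 0 < α) (hα2 : α < 2) (j : ℕ → ℝ)
    (hj : ∀ N : ℕ, 1 ≤ N → IsFirstPosZero (besselJ (((N : ℝ) - 2) / 2)) (j N)) :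
    Tendsto (fun N : ℕ => ((N : ℝ) / 2) ^ α / fracHardyConst N α) atTop (nhds 1) ∧
    Tendsto (fun N : ℕ => fracHardyConst N α / j N ^ α) atTop (nhds 1) := by
  have hC := const_tendsto α hα hα2
  constructor
  · have h := hC.inv₀ one_ne_zero
    rw [inv_one] at h
    exact h.congr fun N => inv_div _ _
  · have h := hC.div ((j_tendsto j hj).rpow_const (p := α) (Or.inl one_ne_zero))
      (by rw [Real.one_rpow]; exact one_ne_zero)
    rw [Real.one_rpow, div_one] at h
    refine h.congr' ?_
    filter_upwards [eventually_ge_atTop 1] with N hN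
    have hNp : (0:ℝ) < (N : ℝ) / 2 := by
      have : (1:ℝ) ≤ N := by exact_mod_cast hN
      linarith
    rw [Pi.div_apply, Real.div_rpow (hj N hN).1.le hNp.le,
      div_div_div_cancel_right₀ (Real.rpow_pos_of_pos hNp _).ne']
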